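/- Let S be an X-generated inverse monoid and let σ be its minimum group congruence. Then S is strongly F-inverse if and only if S is a (canonical) homomorphic image of M_{sF}(S/σ, X). -/

import Mathlib

/-! Write `[w]` for the value of a word in the group `G ≅ S/σ` and `Γ_w` for the graph spanned by
the path labelled `w`.

If `S` is strongly F-inverse, then `1` is the top of its own σ-class, because the maximum of that
class lies above `1`; so every word with `[w] = 1` has idempotent value, i.e. `S` is E-unitary
(`eval_idem`). Consequently, if an idempotent `e` lies below the range idempotents of two words with
the same value in `G`, then left multiplication by `e` makes these words equal in `S`
(`cut_eq`). Taking `e = u u⁻¹`, walking along a path inside `Γ_u` never leaves the words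
whose range idempotent lies above `e` (`range_of_subset`), hence `Γ_u = Γ_v` and `[u] = [v]` give
`u = v` in `S` (`eval_eq_of_mm`). So evaluation in `S` respects the defining relations of
Margolis and Meakin, and it respects those of `ξ_G` by hypothesis; thus it factors
through `M_sF`.

Conversely, erasing the loops of a path labelled `t` produces a simple path labelled `p` with
`[p] = [t]` and `Γ_p ⊆ Γ_t` (`exists_simple`). Then `t` and `t t⁻¹ p` span the same graph, so their
images in any quotient of `M(G, X)` agree, which means that `t ≤ p` there. In a quotient of `M_sF` all
simple words with the same value in `G` are identified, so their common image is the maximum of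
the σ-class. -/

/-! Common framework: words over a doubled alphabet, inverse monoids,
presentations of inverse monoids as quotients of the free monoid on letters,
the minimum group congruence, F-inverse and strongly F-inverse properties,
and the Margolis-Meakin / M_sF machinery. -/

namespace SFI

/-- A letter of the doubled alphabet X̄ = X ∪ X⁻¹: a generator together with a
polarity (`true` = the generator itself, `false` = its formal inverse). -/
abbrev Letter (X : Type*) := X × Bool

/-- Words over the doubled alphabet X̄, i.e. elements of the free monoid X̄*. -/
abbrev Word (X : Type*) := FreeMonoid (Letter X)

variable {X : Type*}

/-- The formal inverse of a letter. -/
def invL (a : Letter X) : Letter X := (a.1, !a.2)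

theorem invL_invL (a : Letter X) : invL (invL a) = a := by
  cases a; simp [invL]

/-- Formal inversion of a word: reverse the word and invert each letter. -/
def wordInv (w : Word X) : Word X :=
  FreeMonoid.ofList (((FreeMonoid.toList w).reverse).map invL)

theorem wordInv_mul (u v : Word X) : wordInv (u * v) = wordInv v * wordInv u := by
  simp only [wordInv, FreeMonoid.toList_mul, List.reverse_append, List.map_append,
    FreeMonoid.ofList_append]

theorem wordInv_wordInv (w : Word X) : wordInv (wordInv w) = w := by
  simp only [wordInv, FreeMonoid.toList_ofList, List.map_reverse, List.reverse_reverse,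
    List.map_map]
  have : (invL ∘ invL : Letter X → Letter X) = id := funext invL_invL
  rw [this, List.map_id, FreeMonoid.ofList_toList]

/-- Evaluation of a letter in a monoid-with-inversion, along a map `ι` of generators. -/
def evalLetter {M : Type*} [Monoid M] [Inv M] (ι : X → M) (a : Letter X) : M :=
  if a.2 then ι a.1 else (ι a.1)⁻¹

/-- Evaluation of a word in a monoid-with-inversion, along a map `ι` of generators:
`evalWord ι w` is the element `[w]` represented by the word `w`. -/
def evalWord {M : Type*} [Monoid M] [Inv M] (ι : X → M) (w : Word X) : M :=
  ((FreeMonoid.toList w).map (evalLetter ι)).prod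

/-- `M` is `X`-generated via `ι : X → M` if every element of `M` is represented by
some word over the doubled alphabet X̄. -/
def XGen {M : Type*} [Monoid M] [Inv M] (ι : X → M) : Prop :=
  Function.Surjective (evalWord ι)

/-- Inverse monoids, as a variety: a monoid with an involutive anti-automorphism `⁻¹`
such that `a a⁻¹ a = a` and idempotents (elements of the form `a a⁻¹`) commute.
This is equivalent to every element having a unique von Neumann inverse. -/
class InverseMonoid (M : Type*) extends Monoid M, Inv M where
  mul_inv_rev : ∀ a b : M, (a * b)⁻¹ = b⁻¹ * a⁻¹
  inv_inv : ∀ a : M, a⁻¹⁻¹ = a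
  mul_inv_mul : ∀ a : M, a * a⁻¹ * a = a
  idem_mul_comm : ∀ a b : M, a * a⁻¹ * (b * b⁻¹) = b * b⁻¹ * (a * a⁻¹)

/-- The natural partial order of an inverse monoid: `a ≤ b` iff `a = a a⁻¹ b`. -/
def natLe {M : Type*} [Monoid M] [Inv M] (a b : M) : Prop := a = a * a⁻¹ * b

/-- A congruence has group quotient iff every element of the quotient is (two-sided)
invertible. -/
def IsGroupCon {M : Type*} [Monoid M] (c : Con M) : Prop := ∀ x : c.Quotient, IsUnit x

/-- The minimum group congruence σ of a monoid: the infimum of all congruences whose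
quotient is a group.  For an inverse monoid this is the least group congruence, and
the quotient is the maximum group image. -/
def sigmaCon (M : Type*) [Monoid M] : Con M := sInf {c : Con M | IsGroupCon c}

/-- An inverse monoid is F-inverse if every σ-class has a maximum element in the
natural partial order. -/
def FInverse (M : Type*) [InverseMonoid M] : Prop :=
  ∀ a : M, ∃ m : M, sigmaCon M m a ∧ ∀ b : M, sigmaCon M b a → natLe b m

/-- The word obtained from the prefix of length `k` of `w`. -/
def wordPrefix (w : Word X) (k : ℕ) : Word X :=
  FreeMonoid.ofList ((FreeMonoid.toList w).take k)

/-- `w` labels a simple path starting at `1` in the Cayley graph of the maximum group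
image `S/σ` of the inverse monoid `S` (w.r.t. the generating map `ι`): the values of
distinct prefixes of `w` lie in distinct σ-classes, i.e. the vertices visited by the
path are pairwise distinct. -/
def IsSimplePathWordS {S : Type*} [InverseMonoid S] (ι : X → S) (w : Word X) : Prop :=
  ∀ j k : ℕ, j ≤ (FreeMonoid.toList w).length → k ≤ (FreeMonoid.toList w).length →
    sigmaCon S (evalWord ι (wordPrefix w j)) (evalWord ι (wordPrefix w k)) → j = k

/-- An X-generated inverse monoid `S` (via `ι`) is strongly F-inverse: it is F-inverse,
and the canonical morphism from the Margolis-Meakin expansion `M(S/σ, X)` to `S` sends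
all maximal elements of each σ-class of `M(S/σ,X)` (namely, the graphs spanned by simple
paths from 1 to a fixed vertex) to the single maximum element of the corresponding
σ-class of `S`.  Concretely: any two words labelling simple paths from 1 to the same
vertex of the Cayley graph of S/σ represent the same element of `S`, and this element
is the top of its σ-class. -/
def StronglyFInverse {S : Type*} [InverseMonoid S] (ι : X → S) : Prop :=
  XGen ι ∧ FInverse S ∧
    ∀ u v : Word X, IsSimplePathWordS ι u → IsSimplePathWordS ι v →
      sigmaCon S (evalWord ι u) (evalWord ι v) →
      evalWord ι u = evalWord ι v ∧
        ∀ t : Word X, sigmaCon S (evalWord ι t) (evalWord ι u) →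
          natLe (evalWord ι t) (evalWord ι u)

/-! ### Presentations of inverse monoids -/

/-- The generating pairs of the Wagner congruence on X̄*: `(w w⁻¹ w, w)` and
`(u u⁻¹ v v⁻¹, v v⁻¹ u u⁻¹)`. -/
def wagnerRel : Word X → Word X → Prop := fun a b =>
  (∃ w : Word X, a = w * wordInv w * w ∧ b = w) ∨
  (∃ u v : Word X, a = u * wordInv u * (v * wordInv v) ∧ b = v * wordInv v * (u * wordInv u))

/-- The congruence on X̄* generated by the Wagner relations together with the extra
defining relations `r`; the corresponding quotient is the inverse monoid
`Inv⟨X ∣ r⟩`.  (The relation set is closed under formal inversion; this does not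
change the congruence, since any monoid congruence on an inverse monoid automatically
respects inversion, but it makes the inversion on the quotient directly definable.) -/
def presCon (r : Word X → Word X → Prop) : Con (Word X) :=
  conGen (fun u v => (wagnerRel u v ∨ r u v) ∨
    (wagnerRel (wordInv u) (wordInv v) ∨ r (wordInv u) (wordInv v)))

/-- The inverse monoid presented by the defining relations `r` (together with the
Wagner relations), i.e. `Inv⟨X ∣ r⟩`, a quotient of the free inverse monoid FIM(X). -/
def InvPres (r : Word X → Word X → Prop) : Type _ := (presCon r).Quotient

instance (r : Word X → Word X → Prop) : Monoid (InvPres r) :=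
  inferInstanceAs (Monoid (presCon r).Quotient)

theorem presCon_inv {r : Word X → Word X → Prop} {u v : Word X} (h : presCon r u v) :
    presCon r (wordInv u) (wordInv v) := by
  show ConGen.Rel _ (wordInv u) (wordInv v)
  have h' : ConGen.Rel (fun u v => (wagnerRel u v ∨ r u v) ∨
      (wagnerRel (wordInv u) (wordInv v) ∨ r (wordInv u) (wordInv v))) u v := h
  clear h
  induction h' with
  | of a b hab =>
    apply ConGen.Rel.of
    rcases hab with hab | hab
    · exact Or.inr (by rwa [wordInv_wordInv, wordInv_wordInv])
    · exact Or.inl hab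
  | refl a => exact ConGen.Rel.refl _
  | symm _ ih => exact ConGen.Rel.symm ih
  | trans _ _ ih₁ ih₂ => exact ConGen.Rel.trans ih₁ ih₂
  | mul _ _ ih₁ ih₂ => rw [wordInv_mul, wordInv_mul]; exact ConGen.Rel.mul ih₂ ih₁

instance (r : Word X → Word X → Prop) : Inv (InvPres r) :=
  ⟨Quotient.map' wordInv (fun _ _ h => presCon_inv h)⟩

instance (r : Word X → Word X → Prop) : InverseMonoid (InvPres r) where
  mul_inv_rev a b := by
    refine Quotient.inductionOn₂' a b (fun u v => ?_)
    exact congrArg Quotient.mk'' (wordInv_mul u v)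
  inv_inv a := by
    refine Quotient.inductionOn' a (fun u => ?_)
    exact congrArg Quotient.mk'' (wordInv_wordInv u)
  mul_inv_mul a := by
    refine Quotient.inductionOn' a (fun u => ?_)
    exact Quotient.sound' (ConGen.Rel.of _ _ (Or.inl (Or.inl (Or.inl ⟨u, rfl, rfl⟩))))
  idem_mul_comm a b := by
    refine Quotient.inductionOn₂' a b (fun u v => ?_)
    exact Quotient.sound' (ConGen.Rel.of _ _ (Or.inl (Or.inl (Or.inr ⟨u, v, rfl, rfl⟩))))

/-- The element of `Inv⟨X ∣ r⟩` represented by the word `w`. -/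
def mkW (r : Word X → Word X → Prop) (w : Word X) : InvPres r := Quotient.mk'' w

/-- The canonical generating map `X → Inv⟨X ∣ r⟩`. -/
def genMap (r : Word X → Word X → Prop) : X → InvPres r :=
  fun x => mkW r (FreeMonoid.of (x, true))

/-- The defining relation of a special inverse monoid `Inv⟨X ∣ w = 1⟩`. -/
def specialRel (w : Word X) : Word X → Word X → Prop := fun a b => a = w ∧ b = 1

/-- The defining relations of a special inverse monoid `Inv⟨X ∣ wᵢ = 1 (i ∈ I)⟩`. -/
def familyRel {I : Type*} (w : I → Word X) : Word X → Word X → Prop :=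
  fun a b => ∃ i, a = w i ∧ b = 1

/-- The defining relations of an inverse monoid `Inv⟨X ∣ uᵢ = vᵢ (i ∈ I)⟩`. -/
def pairsRel {I : Type*} (p : I → Word X × Word X) : Word X → Word X → Prop :=
  fun a b => ∃ i, a = (p i).1 ∧ b = (p i).2

/-! ### Cayley graphs -/

section Graph

variable {G : Type*} [Monoid G] [Inv G]

/-- The set of (inverse-closed pairs of) edges of the Cayley graph traversed by the
path starting at `g` and labelled by the list of letters `l`; an edge from `h`
labelled by the letter `a` is recorded as the pair `(h, a)`, together with its
inverse edge `(h·[a], a⁻¹)`. -/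
def pathEdges (ιG : X → G) : G → List (Letter X) → Set (G × Letter X)
  | _, [] => ∅
  | g, a :: l =>
      insert (g, a) (insert (g * evalLetter ιG a, invL a)
        (pathEdges ιG (g * evalLetter ιG a) l))

/-- `Γ_w`: the subgraph (set of edges) of the Cayley graph of `G` spanned by the path
starting at `1` labelled by the word `w`. -/
def Gamma (ιG : X → G) (w : Word X) : Set (G × Letter X) :=
  pathEdges ιG 1 (FreeMonoid.toList w)

/-- `w` labels a simple path starting at `1` in the Cayley graph of `G`: the values of
distinct prefixes of `w` are distinct vertices. -/
def IsSimplePathWordG (ιG : X → G) (w : Word X) : Prop :=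
  ∀ j k : ℕ, j ≤ (FreeMonoid.toList w).length → k ≤ (FreeMonoid.toList w).length →
    evalWord ιG (wordPrefix w j) = evalWord ιG (wordPrefix w k) → j = k

/-- `w` labels a simple cycle (based at `1`) in the Cayley graph of `G`: `w` is
non-empty, `w = 1` holds in `G`, and the initial vertices of the edges of the cycle
(i.e. the values of the proper prefixes of `w`) are pairwise distinct. -/
def IsSimpleCycleWordG (ιG : X → G) (w : Word X) : Prop :=
  w ≠ 1 ∧ evalWord ιG w = 1 ∧
    ∀ j k : ℕ, j < (FreeMonoid.toList w).length → k < (FreeMonoid.toList w).length →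
      evalWord ιG (wordPrefix w j) = evalWord ιG (wordPrefix w k) → j = k

/-- The defining relation of the Margolis-Meakin expansion `M(G,X)` as a quotient of
X̄*: two words are identified iff they span the same subgraph of the Cayley graph and
represent the same element of `G`. -/
def mmRel (ιG : X → G) : Word X → Word X → Prop := fun u v =>
  Gamma ιG u = Gamma ιG v ∧ evalWord ιG u = evalWord ιG v

/-- The generating pairs of the congruence ξ_G: two words labelling simple paths from
`1` to the same element of `G` are identified. -/
def spRel (ιG : X → G) : Word X → Word X → Prop := fun u v =>
  IsSimplePathWordG ιG u ∧ IsSimplePathWordG ιG v ∧ evalWord ιG u = evalWord ιG v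

/-- The defining relations of `M_sF(G,X) = M(G,X)/ξ_G` as a quotient of X̄*. -/
def msfRel (ιG : X → G) : Word X → Word X → Prop := fun u v =>
  mmRel ιG u v ∨ spRel ιG u v

/-- `M_sF(G,X)`: the quotient of the Margolis-Meakin expansion `M(G,X)` by the
congruence ξ_G identifying, for each `g ∈ G`, all graphs spanned by simple paths
from `1` to `g`. -/
abbrev MsF (ιG : X → G) := InvPres (msfRel ιG)

end Graph

/-! ### Reduced words, cyclic words, linked words, invertible pieces -/

/-- A word over X̄ is reduced if it has no factor of the form `x x⁻¹` or `x⁻¹ x`. -/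
def ReducedWord (w : Word X) : Prop :=
  ∀ a : Letter X, ¬ ([a, invL a] <:+: FreeMonoid.toList w)

/-- A word over X̄ is cyclically reduced if it is reduced and its first and last
letters are not mutually inverse. -/
def CyclicallyReducedWord (w : Word X) : Prop :=
  ReducedWord w ∧ ∀ a : Letter X, (FreeMonoid.toList w).head? = some a →
    (FreeMonoid.toList w).getLast? ≠ some (invL a)

/-- A cyclically reduced word is cyclic with respect to `(G,X)` if it labels a simple
cycle in the Cayley graph of `G`. -/
def IsCyclicWord {G : Type*} [Monoid G] [Inv G] (ιG : X → G) (w : Word X) : Prop :=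
  CyclicallyReducedWord w ∧ IsSimpleCycleWordG ιG w

/-- `w'` is a cyclic conjugate of `w`. -/
def IsCyclicConjugate (w' w : Word X) : Prop := ∃ u v : Word X, w' = u * v ∧ v * u = w

/-- A word is linked with respect to `(M, ι)` if for every pair of adjacent letters
`a, b` of the word, `a⁻¹ a = b b⁻¹` holds in `M` (the letters are "matching"). -/
def Linked {M : Type*} [Monoid M] [Inv M] (ι : X → M) (w : Word X) : Prop :=
  ∀ (p q : Word X) (a b : Letter X),
    w = p * (FreeMonoid.of a * (FreeMonoid.of b * q)) →
    (evalLetter ι a)⁻¹ * evalLetter ι a = evalLetter ι b * (evalLetter ι b)⁻¹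

/-- `ws` is the factorisation of the word `w` into minimal invertible pieces with
respect to `(M, ι)`: `w` is the concatenation of the members of `ws`, each of which is
a non-empty word representing an invertible element of `M` such that no proper
non-empty prefix or suffix represents an invertible element of `M`. -/
def IsPieceDecomp {M : Type*} [Monoid M] [Inv M] (ι : X → M) (w : Word X)
    (ws : List (Word X)) : Prop :=
  ws.prod = w ∧ ∀ z ∈ ws, z ≠ 1 ∧ IsUnit (evalWord ι z) ∧
    ∀ p s : Word X, z = p * s → p ≠ 1 → s ≠ 1 →
      ¬ IsUnit (evalWord ι p) ∧ ¬ IsUnit (evalWord ι s)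

/-! ### Evaluation of words -/

section Eval

variable {M : Type*} [Monoid M] [Inv M] (ι : X → M)

theorem evalWord_one : evalWord ι (1 : Word X) = 1 := by
  simp [evalWord]

theorem evalWord_mul (u v : Word X) : evalWord ι (u * v) = evalWord ι u * evalWord ι v := by
  simp [evalWord]

theorem evalWord_of (a : Letter X) : evalWord ι (FreeMonoid.of a) = evalLetter ι a := by
  simp [evalWord]

end Eval

theorem wordInv_of (a : Letter X) : wordInv (FreeMonoid.of a) = FreeMonoid.of (invL a) := rfl

theorem wordInv_one : wordInv (1 : Word X) = 1 := rfl

/-- A group, with its usual inversion, is an inverse monoid. -/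
abbrev groupInverseMonoid (G : Type*) [Group G] : InverseMonoid G where
  mul_inv_rev := mul_inv_rev
  inv_inv := inv_inv
  mul_inv_mul a := by simp
  idem_mul_comm a b := by simp

/-! ### Inverse monoids -/

section Inverse

variable {S : Type*} [InverseMonoid S]

theorem im_one_inv : (1 : S)⁻¹ = 1 := by
  have h := InverseMonoid.mul_inv_mul (1 : S)
  simpa using h

theorem im_assoc_inv (a b : S) : a * (a⁻¹ * (a * b)) = a * b := by
  rw [← mul_assoc, ← mul_assoc, InverseMonoid.mul_inv_mul]

theorem evalLetter_invL (ι : X → S) (a : Letter X) :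
    evalLetter ι (invL a) = (evalLetter ι a)⁻¹ := by
  rcases a with ⟨x, _ | _⟩ <;> simp [evalLetter, invL, InverseMonoid.inv_inv]

theorem evalWord_wordInv (ι : X → S) (w : Word X) :
    evalWord ι (wordInv w) = (evalWord ι w)⁻¹ := by
  induction w using FreeMonoid.inductionOn' with
  | one => rw [wordInv_one, evalWord_one, im_one_inv]
  | of_mul a w ih =>
    rw [wordInv_mul, wordInv_of, evalWord_mul, evalWord_mul, evalWord_of, evalWord_of, ih,
      evalLetter_invL, InverseMonoid.mul_inv_rev]

/-- The range idempotent of a product lies below that of its left factor. -/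
theorem range_mul_le (p z : S) : p * z * (p * z)⁻¹ * (p * p⁻¹) = p * z * (p * z)⁻¹ := by
  rw [InverseMonoid.idem_mul_comm, ← mul_assoc, ← mul_assoc, InverseMonoid.mul_inv_mul]

theorem range_idem (u : S) : u * u⁻¹ * (u * u⁻¹) = u * u⁻¹ := by
  rw [← mul_assoc, InverseMonoid.mul_inv_mul]

theorem range_inv (u : S) : (u * u⁻¹)⁻¹ = u * u⁻¹ := by
  rw [InverseMonoid.mul_inv_rev, InverseMonoid.inv_inv]

end Inverse

theorem evalWord_wordInv_group {G : Type*} [Group G] (ιG : X → G) (w : Word X) :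
    evalWord ιG (wordInv w) = (evalWord ιG w)⁻¹ :=
  letI := groupInverseMonoid G
  evalWord_wordInv ιG w

theorem evalLetter_invL_group {G : Type*} [Group G] (ιG : X → G) (a : Letter X) :
    evalLetter ιG (invL a) = (evalLetter ιG a)⁻¹ :=
  letI := groupInverseMonoid G
  evalLetter_invL ιG a

/-! ### Graphs spanned by paths -/

section Paths

variable {G : Type*} [Group G] (ιG : X → G)

theorem pathEdges_append (g : G) (l₁ l₂ : Word X) :
    pathEdges ιG g (FreeMonoid.toList (l₁ * l₂)) =
      pathEdges ιG g (FreeMonoid.toList l₁) ∪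
        pathEdges ιG (g * evalWord ιG l₁) (FreeMonoid.toList l₂) := by
  induction l₁ using FreeMonoid.inductionOn' generalizing g with
  | one => simp [evalWord_one, pathEdges]
  | of_mul a w ih =>
    rw [mul_assoc]
    simp only [FreeMonoid.toList_of_mul, pathEdges, evalWord_mul, evalWord_of]
    rw [ih, Set.insert_union, Set.insert_union, mul_assoc]

/-- Traversing a path backwards spans the same graph. -/
theorem pathEdges_wordInv (g : G) (l : Word X) :
    pathEdges ιG (g * evalWord ιG l) (FreeMonoid.toList (wordInv l)) =
      pathEdges ιG g (FreeMonoid.toList l) := by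
  induction l using FreeMonoid.inductionOn' generalizing g with
  | one => simp [wordInv_one, pathEdges]
  | of_mul a w ih =>
    rw [wordInv_mul, pathEdges_append, evalWord_mul, evalWord_of, ← mul_assoc, ih,
      evalWord_wordInv_group, mul_inv_cancel_right, wordInv_of]
    simp only [FreeMonoid.toList_of_mul, FreeMonoid.toList_of, pathEdges,
      evalLetter_invL_group, mul_inv_cancel_right, invL_invL]
    ext x
    simp only [Set.mem_union, Set.mem_insert_iff, Set.mem_empty_iff_false]
    tauto

theorem Gamma_mul (u v : Word X) :
    Gamma ιG (u * v) = Gamma ιG u ∪ pathEdges ιG (evalWord ιG u) (FreeMonoid.toList v) := by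
  simp only [Gamma, pathEdges_append, one_mul]

/-- Every edge of a spanned graph is traversed, in one of the two directions, right after some
prefix of the spanning word. -/
theorem mem_pathEdges (g h : G) (b : Letter X) (w : Word X)
    (hm : (h, b) ∈ pathEdges ιG g (FreeMonoid.toList w)) :
    ∃ (p : Word X) (a : Letter X) (z : Word X), w = p * FreeMonoid.of a * z ∧
      ((h = g * evalWord ιG p ∧ b = a) ∨
        (h = g * evalWord ιG (p * FreeMonoid.of a) ∧ b = invL a)) := by
  induction w using FreeMonoid.inductionOn' generalizing g with
  | one => simp [pathEdges] at hm
  | of_mul a w ih =>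
    simp only [FreeMonoid.toList_of_mul, pathEdges, Set.mem_insert_iff, Prod.mk.injEq] at hm
    rcases hm with ⟨rfl, rfl⟩ | ⟨rfl, rfl⟩ | hm
    · exact ⟨1, b, w, by simp, Or.inl ⟨by simp [evalWord_one], rfl⟩⟩
    · exact ⟨1, a, w, by simp, Or.inr ⟨by simp [evalWord_of], rfl⟩⟩
    · obtain ⟨p, c, z, rfl, hc⟩ := ih _ hm
      refine ⟨FreeMonoid.of a * p, c, z, by simp only [mul_assoc], ?_⟩
      simpa only [evalWord_mul, evalWord_of, mul_assoc] using hc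

/-- Loop erasure: inside the graph spanned by any path there is a simple path with the same end
points. -/
theorem exists_simple (t : Word X) :
    ∃ p : Word X, IsSimplePathWordG ιG p ∧ evalWord ιG p = evalWord ιG t ∧
      Gamma ιG p ⊆ Gamma ιG t := by
  induction hn : (FreeMonoid.toList t).length using Nat.strong_induction_on generalizing t with
  | _ n ih =>
    by_cases hs : IsSimplePathWordG ιG t
    · exact ⟨t, hs, rfl, subset_rfl⟩
    -- A repeated vertex splits `t` as `p * q * r` with `[q] = 1` and `q` nonempty.
    have key : ∃ p q r : Word X, t = p * q * r ∧ 0 < (FreeMonoid.toList q).length ∧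
        evalWord ιG (p * q) = evalWord ιG p := by
      have aux : ∀ j k : ℕ, k ≤ (FreeMonoid.toList t).length → j < k →
          evalWord ιG (wordPrefix t j) = evalWord ιG (wordPrefix t k) →
          ∃ p q r : Word X, t = p * q * r ∧ 0 < (FreeMonoid.toList q).length ∧
            evalWord ιG (p * q) = evalWord ιG p := by
        intro j k hk hjk he
        have hpq : wordPrefix t j *
            FreeMonoid.ofList (((FreeMonoid.toList t).take k).drop j) = wordPrefix t k := by
          apply FreeMonoid.toList.injective
          simp only [wordPrefix, FreeMonoid.toList_mul, FreeMonoid.toList_ofList]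
          conv_rhs => rw [← List.take_append_drop j ((FreeMonoid.toList t).take k)]
          rw [List.take_take, min_eq_left hjk.le]
        refine ⟨wordPrefix t j, FreeMonoid.ofList (((FreeMonoid.toList t).take k).drop j),
          FreeMonoid.ofList ((FreeMonoid.toList t).drop k), ?_, ?_, ?_⟩
        · rw [hpq]
          apply FreeMonoid.toList.injective
          simp [wordPrefix]
        · simp only [FreeMonoid.toList_ofList, List.length_drop, List.length_take]
          omega
        · rw [hpq, he]
      unfold IsSimplePathWordG at hs
      push Not at hs
      obtain ⟨j, k, hj, hk, he, hne⟩ := hs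
      rcases lt_or_gt_of_ne hne with h | h
      · exact aux j k hk h he
      · exact aux k j hj h he.symm
    obtain ⟨p, q, r, rfl, hq, he⟩ := key
    obtain ⟨p', hp', hpe, hpG⟩ := ih (FreeMonoid.toList (p * r)).length
      (by simp only [FreeMonoid.toList_mul, List.length_append] at hn ⊢; omega) (p * r) rfl
    refine ⟨p', hp', by rw [hpe, evalWord_mul, evalWord_mul ιG (p * q), he], hpG.trans ?_⟩
    rw [Gamma_mul, Gamma_mul, Gamma_mul, he]
    exact Set.union_subset_union_left _ Set.subset_union_left

/-- If `Γ_p ⊆ Γ_t`, then `t` and `t t⁻¹ p` span the same graph. -/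
theorem Gamma_absorb (t p : Word X) (h : Gamma ιG p ⊆ Gamma ιG t) :
    Gamma ιG (t * wordInv t * p) = Gamma ιG t := by
  have h1 := pathEdges_wordInv ιG 1 t
  rw [one_mul] at h1
  rw [Gamma_mul, Gamma_mul, h1, evalWord_mul, evalWord_wordInv_group, mul_inv_cancel]
  simp only [Gamma] at h ⊢
  rw [Set.union_self, Set.union_eq_left.mpr h]

end Paths

/-! ### The Margolis-Meakin relations hold in F-inverse monoids -/

section Main

variable {S G : Type*} [InverseMonoid S] [Group G] {ι : X → S} {ιG : X → G}

theorem simple_iff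
    (hmax : ∀ u v : Word X,
      evalWord ιG u = evalWord ιG v ↔ sigmaCon S (evalWord ι u) (evalWord ι v))
    (w : Word X) : IsSimplePathWordS ι w ↔ IsSimplePathWordG ιG w := by
  simp only [IsSimplePathWordS, IsSimplePathWordG, hmax]

/-- F-inverse monoids are E-unitary: the maximum of the class of `1` is `1` itself. -/
theorem eval_idem (hF : FInverse S)
    (hmax : ∀ u v : Word X,
      evalWord ιG u = evalWord ιG v ↔ sigmaCon S (evalWord ι u) (evalWord ι v))
    (w : Word X) (hw : evalWord ιG w = 1) :
    evalWord ι w = evalWord ι w * (evalWord ι w)⁻¹ := by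
  obtain ⟨m, -, hm⟩ := hF 1
  have h1 := hm 1 ((sigmaCon S).refl 1)
  rw [natLe, im_one_inv, one_mul, one_mul] at h1
  subst h1
  have hs := (hmax w 1).1 (by rw [hw, evalWord_one])
  rw [evalWord_one] at hs
  simpa [natLe] using hm _ hs

/-- In an E-unitary monoid, σ-related elements agree after cutting them down to a common smaller
range. -/
theorem cut_eq (hF : FInverse S)
    (hmax : ∀ u v : Word X,
      evalWord ιG u = evalWord ιG v ↔ sigmaCon S (evalWord ι u) (evalWord ι v))
    (e : S) (p q : Word X) (hpq : evalWord ιG p = evalWord ιG q)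
    (hp : e * (evalWord ι p * (evalWord ι p)⁻¹) = e)
    (hq : e * (evalWord ι q * (evalWord ι q)⁻¹) = e) :
    e * evalWord ι p = e * evalWord ι q := by
  have hf := eval_idem hF hmax (wordInv p * q)
    (by rw [evalWord_mul, evalWord_wordInv_group, hpq, inv_mul_cancel])
  rw [evalWord_mul, evalWord_wordInv] at hf
  set P := evalWord ι p
  set Q := evalWord ι q
  -- The element `P⁻¹ Q` is idempotent, hence equal to its inverse `Q⁻¹ P`.
  have hinv : Q⁻¹ * P = P⁻¹ * Q := by
    have h := congrArg (fun x : S => x⁻¹) hf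
    simp only [range_inv] at h
    rw [← hf, InverseMonoid.mul_inv_rev, InverseMonoid.inv_inv] at h
    exact h
  have hff : P⁻¹ * Q * (P⁻¹ * Q) = P⁻¹ * Q := by
    rw [hf]; exact range_idem _
  have h1 : e * Q = e * P * (P⁻¹ * Q) := by
    conv_lhs => rw [← hp]
    simp only [mul_assoc]
  have h2 : e * P = e * Q * (P⁻¹ * Q) := by
    rw [← hinv]
    conv_lhs => rw [← hq]
    simp only [mul_assoc]
  rw [h2, h1, mul_assoc, hff]

/-- A path inside `Γ_u` labels a word whose range idempotent lies above that of `u`. -/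
theorem range_of_subset (hF : FInverse S)
    (hmax : ∀ u v : Word X,
      evalWord ιG u = evalWord ιG v ↔ sigmaCon S (evalWord ι u) (evalWord ι v))
    (u v : Word X) (h : Gamma ιG v ⊆ Gamma ιG u) :
    evalWord ι u * (evalWord ι u)⁻¹ * (evalWord ι v * (evalWord ι v)⁻¹) =
      evalWord ι u * (evalWord ι u)⁻¹ := by
  -- Induction on the length of `v`, splitting off the last letter.
  have snoc : ∀ n : ℕ, ∀ v : Word X, (FreeMonoid.toList v).length = n →
      Gamma ιG v ⊆ Gamma ιG u →
      evalWord ι u * (evalWord ι u)⁻¹ * (evalWord ι v * (evalWord ι v)⁻¹) =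
        evalWord ι u * (evalWord ι u)⁻¹ := by
    intro n
    induction n with
    | zero =>
      intro v hv _
      have : v = 1 := List.length_eq_zero_iff.1 hv
      rw [this, evalWord_one, im_one_inv, mul_one, mul_one]
    | succ n ih =>
      intro w hw hsub
      obtain ⟨v, a, rfl⟩ : ∃ (v : Word X) (a : Letter X), w = v * FreeMonoid.of a := by
        rcases List.eq_nil_or_concat (FreeMonoid.toList w) with h0 | ⟨l, a, hl⟩
        · rw [h0] at hw
          simp at hw
        · exact ⟨FreeMonoid.ofList l, a, FreeMonoid.toList.injective (by simpa using hl)⟩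
      have hlen : (FreeMonoid.toList v).length = n := by
        simpa using hw
      rw [Gamma_mul] at hsub
      have hv := ih v hlen (Set.subset_union_left.trans hsub)
      have hmem : (evalWord ιG v, a) ∈ Gamma ιG u :=
        hsub (Or.inr (by simp [pathEdges]))
      -- The path labelled `u` traverses the edge `([v], a)`, so there is a word `q` with `[q] = [v]`
      -- such that the range idempotents of `q` and `q a` lie above that of `u`.
      obtain ⟨q, hqv, hq, hqa⟩ : ∃ q : Word X, evalWord ιG v = evalWord ιG q ∧
          evalWord ι u * (evalWord ι u)⁻¹ * (evalWord ι q * (evalWord ι q)⁻¹) =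
            evalWord ι u * (evalWord ι u)⁻¹ ∧
          evalWord ι u * (evalWord ι u)⁻¹ * (evalWord ι (q * FreeMonoid.of a) *
            (evalWord ι (q * FreeMonoid.of a))⁻¹) = evalWord ι u * (evalWord ι u)⁻¹ := by
        obtain ⟨p, b, z, rfl, ⟨hp, rfl⟩ | ⟨hp, rfl⟩⟩ := mem_pathEdges ιG _ _ _ _ hmem
        · refine ⟨p, by simpa using hp, ?_, ?_⟩
          · rw [mul_assoc p, evalWord_mul]
            exact range_mul_le _ _
          · rw [evalWord_mul _ (p * FreeMonoid.of a)]
            exact range_mul_le _ _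
        · refine ⟨p * FreeMonoid.of b, by simpa using hp, ?_, ?_⟩
          · rw [evalWord_mul _ (p * FreeMonoid.of b)]
            exact range_mul_le _ _
          · -- The words `p b b⁻¹` and `p b` have the same range idempotent.
            have hr : evalWord ι (p * FreeMonoid.of b * FreeMonoid.of (invL b)) *
                (evalWord ι (p * FreeMonoid.of b * FreeMonoid.of (invL b)))⁻¹ =
                evalWord ι (p * FreeMonoid.of b) * (evalWord ι (p * FreeMonoid.of b))⁻¹ := by
              simp only [evalWord_mul, evalWord_of, evalLetter_invL, InverseMonoid.mul_inv_rev,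
                InverseMonoid.inv_inv, mul_assoc, im_assoc_inv]
            rw [hr, evalWord_mul _ (p * FreeMonoid.of b)]
            exact range_mul_le _ _
      have hcut := cut_eq hF hmax _ v q hqv hv hq
      rw [evalWord_mul, evalWord_of] at hqa ⊢
      set U := evalWord ι u
      set V := evalWord ι v
      set Q := evalWord ι q
      set A := evalLetter ι a
      have hcut' : V⁻¹ * (U * U⁻¹) = Q⁻¹ * (U * U⁻¹) := by
        have := congrArg (fun x : S => x⁻¹) hcut
        simpa only [InverseMonoid.mul_inv_rev, InverseMonoid.inv_inv] using this
      -- Multiplying by `U U⁻¹` on both sides turns `V` into `Q`.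
      calc U * U⁻¹ * (V * A * (V * A)⁻¹)
          = U * U⁻¹ * (U * U⁻¹ * (V * A * (V * A)⁻¹)) := by
            rw [← mul_assoc (U * U⁻¹) (U * U⁻¹), range_idem]
        _ = U * U⁻¹ * (V * A * (V * A)⁻¹ * (U * U⁻¹)) := by
            rw [InverseMonoid.idem_mul_comm U (V * A)]
        _ = (U * U⁻¹ * V) * A * A⁻¹ * (V⁻¹ * (U * U⁻¹)) := by
            simp only [InverseMonoid.mul_inv_rev, mul_assoc]
        _ = (U * U⁻¹ * Q) * A * A⁻¹ * (Q⁻¹ * (U * U⁻¹)) := by rw [hcut, hcut']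
        _ = U * U⁻¹ * (Q * A * (Q * A)⁻¹) * (U * U⁻¹) := by
            simp only [InverseMonoid.mul_inv_rev, mul_assoc]
        _ = U * U⁻¹ := by rw [hqa, range_idem]
  exact snoc _ v rfl h

/-- An `X`-generated F-inverse monoid is a quotient of the Margolis-Meakin expansion of its maximum
group image. -/
theorem eval_eq_of_mm (hF : FInverse S)
    (hmax : ∀ u v : Word X,
      evalWord ιG u = evalWord ιG v ↔ sigmaCon S (evalWord ι u) (evalWord ι v))
    (u v : Word X) (h : mmRel ιG u v) : evalWord ι u = evalWord ι v := by
  obtain ⟨hG, he⟩ := h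
  have h1 := range_of_subset hF hmax u v hG.ge
  have h2 := range_of_subset hF hmax v u hG.le
  have h3 := cut_eq hF hmax _ u v he (range_idem _) h1
  rw [InverseMonoid.idem_mul_comm, h1] at h2
  rw [InverseMonoid.mul_inv_mul, h2, InverseMonoid.mul_inv_mul] at h3
  exact h3

/-! ### Homomorphisms out of presented inverse monoids -/

theorem eval_wagner (ι : X → S) (u v : Word X) (h : wagnerRel u v) :
    evalWord ι u = evalWord ι v := by
  rcases h with ⟨w, rfl, rfl⟩ | ⟨a, b, rfl, rfl⟩
  · simp only [evalWord_mul, evalWord_wordInv, InverseMonoid.mul_inv_mul]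
  · simp only [evalWord_mul, evalWord_wordInv]
    exact InverseMonoid.idem_mul_comm _ _

/-- If `S` satisfies the defining relations `r`, then words identified in `Inv⟨X ∣ r⟩` have the
same value in `S`. -/
theorem eval_eq_of_presCon (ι : X → S) {r : Word X → Word X → Prop}
    (hr : ∀ u v, r u v → evalWord ι u = evalWord ι v) {u v : Word X} (h : presCon r u v) :
    evalWord ι u = evalWord ι v := by
  have hbase : ∀ u v, wagnerRel u v ∨ r u v → evalWord ι u = evalWord ι v :=
    fun u v h => h.elim (eval_wagner ι u v) (hr u v)
  have h' : ConGen.Rel (fun u v => (wagnerRel u v ∨ r u v) ∨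
      (wagnerRel (wordInv u) (wordInv v) ∨ r (wordInv u) (wordInv v))) u v := h
  clear h
  induction h' with
  | of a b hab =>
    rcases hab with hab | hab
    · exact hbase _ _ hab
    · have h := congrArg (fun x : S => x⁻¹) (hbase _ _ hab)
      simpa only [evalWord_wordInv, InverseMonoid.inv_inv] using h
  | refl a => rfl
  | symm _ ih => exact ih.symm
  | trans _ _ ih₁ ih₂ => exact ih₁.trans ih₂
  | mul _ _ ih₁ ih₂ => rw [evalWord_mul, evalWord_mul, ih₁, ih₂]

/-- The canonical morphism `Inv⟨X ∣ r⟩ → S`, for `S` satisfying the relations `r`. -/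
def presLift (ι : X → S) {r : Word X → Word X → Prop}
    (hr : ∀ u v, r u v → evalWord ι u = evalWord ι v) : InvPres r →* S where
  toFun := fun m => Quotient.liftOn' m (evalWord ι) (fun _ _ h => eval_eq_of_presCon ι hr h)
  map_one' := evalWord_one ι
  map_mul' a b := by
    refine Quotient.inductionOn₂' a b (fun u v => ?_)
    exact evalWord_mul ι u v

theorem mkW_mul (r : Word X → Word X → Prop) (u v : Word X) :
    mkW r (u * v) = mkW r u * mkW r v := rfl

/-- A canonical morphism sends the element represented by a word to the value of that word. -/
theorem map_mkW {r : Word X → Word X → Prop} (φ : InvPres r →* S)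
    (hφ : ∀ x : X, φ (genMap r x) = ι x) (hinv : ∀ m : InvPres r, φ m⁻¹ = (φ m)⁻¹)
    (w : Word X) : φ (mkW r w) = evalWord ι w := by
  induction w using FreeMonoid.inductionOn' with
  | one => rw [evalWord_one]; exact map_one φ
  | of_mul a w ih =>
    rw [mkW_mul, map_mul, ih, evalWord_mul, evalWord_of]
    congr 1
    rcases a with ⟨x, _ | _⟩
    · have h : mkW r (FreeMonoid.of (x, false)) = (genMap r x)⁻¹ := rfl
      rw [h, hinv, hφ]
      rfl
    · exact hφ x

theorem mkW_eq_of_rel {r : Word X → Word X → Prop} {u v : Word X} (h : r u v) :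
    mkW r u = mkW r v :=
  Quotient.sound' (ConGen.Rel.of _ _ (Or.inl (Or.inr h)))

end Main

/-- Let `S` be an `X`-generated inverse monoid with minimum group
congruence `σ`, and let `G` be (a canonical isomorphic copy of) the maximum group
image `S/σ` of `S`, i.e. an `X`-generated group such that two words have the same
value in `G` precisely when their values in `S` are σ-related.  Then `S` is strongly
F-inverse if and only if `S` is a canonical homomorphic image of `M_sF(S/σ, X)`. -/
theorem statement_2 {X S G : Type*} [InverseMonoid S] [Group G] (ι : X → S)
    (hXGen : XGen ι) (ιG : X → G) (hGgen : XGen ιG)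
    (hmax : ∀ u v : Word X,
      evalWord ιG u = evalWord ιG v ↔ sigmaCon S (evalWord ι u) (evalWord ι v)) :
    StronglyFInverse ι ↔
      ∃ φ : MsF ιG →* S, (∀ x : X, φ (genMap (msfRel ιG) x) = ι x) ∧
        (∀ m : MsF ιG, φ m⁻¹ = (φ m)⁻¹) ∧ Function.Surjective φ := by
  constructor
  · rintro ⟨-, hF, hS⟩
    have hr : ∀ u v, msfRel ιG u v → evalWord ι u = evalWord ι v := by
      rintro u v (h | ⟨hu, hv, he⟩)
      · exact eval_eq_of_mm hF hmax u v h
      · exact (hS u v ((simple_iff hmax u).2 hu) ((simple_iff hmax v).2 hv)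
          ((hmax u v).1 he)).1
    refine ⟨presLift ι hr, fun x => evalWord_of ι (x, true), fun m => ?_, fun s => ?_⟩
    · refine Quotient.inductionOn' m (fun u => ?_)
      exact evalWord_wordInv ι u
    · obtain ⟨w, rfl⟩ := hXGen s
      exact ⟨mkW _ w, rfl⟩
  · rintro ⟨φ, hφ, hinv, -⟩
    have hrel : ∀ u v, msfRel ιG u v → evalWord ι u = evalWord ι v := by
      intro u v h
      rw [← map_mkW φ hφ hinv u, ← map_mkW φ hφ hinv v, mkW_eq_of_rel h]
    -- A simple word is the maximum of its class: compare `t` with the loop erasure of `t`.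
    have hle : ∀ t p : Word X, IsSimplePathWordG ιG p → evalWord ιG t = evalWord ιG p →
        natLe (evalWord ι t) (evalWord ι p) := by
      intro t p hp he
      obtain ⟨q, hq, hqe, hqG⟩ := exists_simple ιG t
      rw [hrel p q (Or.inr ⟨hp, hq, by rw [hqe, he]⟩)]
      have h := hrel t (t * wordInv t * q) (Or.inl ⟨(Gamma_absorb ιG t q hqG).symm, by
        rw [evalWord_mul, evalWord_mul, evalWord_wordInv_group, mul_inv_cancel, one_mul, hqe]⟩)
      rwa [evalWord_mul, evalWord_mul, evalWord_wordInv] at h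
    refine ⟨hXGen, fun a => ?_, fun u v hu hv huv => ⟨?_, fun t ht => ?_⟩⟩
    · obtain ⟨w, rfl⟩ := hXGen a
      obtain ⟨p, hp, hpe, -⟩ := exists_simple ιG w
      refine ⟨evalWord ι p, (hmax p w).1 hpe, fun b hb => ?_⟩
      obtain ⟨t, rfl⟩ := hXGen b
      exact hle t p hp (((hmax t w).2 hb).trans hpe.symm)
    · exact hrel u v (Or.inr ⟨(simple_iff hmax u).1 hu, (simple_iff hmax v).1 hv,
        (hmax u v).2 huv⟩)
    · exact hle t u ((simple_iff hmax u).1 hu) ((hmax t u).2 ht)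

end SFI
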